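/- arXiv:2207.02034 — 2 statements merged into one kernel-verified Lean document; each statement's English description precedes it below -/
import Mathlib

section
/- Let R be a Hecke symmetry with parameter q, and let M be an N×N matrix with entries in a unital associative ℂ-algebra 𝒜 satisfying the Reflection Equation R M₁ R M₁ = M₁ R M₁ R. Then for every p ≥ 1 the higher-copy relations R_p M_{p̄} M_{p̄+1} − M_{p̄} M_{p̄+1} R_p = 0 hold as identities of N^{p+1}×N^{p+1} matrices over 𝒜. -/
open Matrix BigOperators

noncomputable section

/-- An `N² × N²` complex matrix, viewed as an operator on `ℂ^N ⊗ ℂ^N`. -/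
abbrev RMat (N : ℕ) := Matrix (Fin N × Fin N) (Fin N × Fin N) ℂ

/-- A matrix on the `k`-th tensor power of `ℂ^N`, with entries in `A`. -/
abbrev TMat (N k : ℕ) (A : Type _) := Matrix (Fin k → Fin N) (Fin k → Fin N) A

/-- The `q`-number `j_q = (q^j - q^{-j})/(q - q^{-1})`. -/
def qNum (q : ℂ) (j : ℕ) : ℂ := (q ^ j - q⁻¹ ^ j) / (q - q⁻¹)

/-- Embedding of an `N²×N²` matrix `R` into the `k`-th tensor power,
acting in the (0-based) tensor factors `i` and `i+1`.  The paper's `R_i`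
(1-based) is `embR k R (i-1)`. -/
def embR {N : ℕ} (k : ℕ) (R : RMat N) (i : ℕ) : TMat N k ℂ := fun f g =>
  if h : i + 1 < k then
    if ∀ j : Fin k, j.val ≠ i → j.val ≠ i + 1 → f j = g j then
      R (f ⟨i, Nat.lt_of_succ_lt h⟩, f ⟨i + 1, h⟩) (g ⟨i, Nat.lt_of_succ_lt h⟩, g ⟨i + 1, h⟩)
    else 0
  else (1 : TMat N k ℂ) f g

/-- `X ⊗ I^{⊗(k-1)}` : the first copy `X_{1̄}` of an `N×N` matrix over `A`. -/
def emb1 {N : ℕ} (k : ℕ) {A : Type _} [Ring A] (X : Matrix (Fin N) (Fin N) A) :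
    TMat N k A := fun f g =>
  if h : 0 < k then
    if ∀ j : Fin k, j.val ≠ 0 → f j = g j then X (f ⟨0, h⟩) (g ⟨0, h⟩) else 0
  else (1 : TMat N k A) f g

/-- Lift a complex matrix to a matrix over the `ℂ`-algebra `A`. -/
def liftC {N k : ℕ} (A : Type _) [Ring A] [Algebra ℂ A] (X : TMat N k ℂ) : TMat N k A :=
  X.map (algebraMap ℂ A)

/-- The copies `X_{1̄}, X_{2̄}, …` of `X` in the `k`-th tensor power:
`copyX k R Rinv X i` is the paper's `X_{\overline{i+1}}`, i.e.
`X_{1̄} = X ⊗ I^{⊗(k-1)}` and `X_{\overline{i+1}} = R_i X_{ī} R_i⁻¹`. -/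
def copyX {N : ℕ} (k : ℕ) (R Rinv : RMat N) {A : Type _} [Ring A] [Algebra ℂ A]
    (X : Matrix (Fin N) (Fin N) A) : ℕ → TMat N k A
  | 0 => emb1 k X
  | i + 1 => liftC A (embR k R i) * copyX k R Rinv X i * liftC A (embR k Rinv i)

/-- The `R`-skew-symmetrizers, on the ambient `k`-th tensor power:
`Asym k R q j` is `A^{(j)}` (acting in the first `j` factors). -/
def Asym {N : ℕ} (k : ℕ) (R : RMat N) (q : ℂ) : ℕ → TMat N k ℂ
  | 0 => 1
  | 1 => 1
  | j + 2 =>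
      (qNum q (j + 2))⁻¹ •
        (Asym k R q (j + 1) *
          ((q ^ (j + 1)) • (1 : TMat N k ℂ) - (qNum q (j + 1)) • embR k R j) *
          Asym k R q (j + 1))

/-- The `R`-symmetrizers, on the ambient `k`-th tensor power:
`Ssym k R q j` is `S^{(j)}` (acting in the first `j` factors). -/
def Ssym {N : ℕ} (k : ℕ) (R : RMat N) (q : ℂ) : ℕ → TMat N k ℂ
  | 0 => 1
  | 1 => 1
  | j + 2 =>
      (qNum q (j + 2))⁻¹ •
        (Ssym k R q (j + 1) *
          ((q⁻¹ ^ (j + 1)) • (1 : TMat N k ℂ) + (qNum q (j + 1)) • embR k R j) *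
          Ssym k R q (j + 1))

/-- The braid relation `R₁₂ R₂₃ R₁₂ = R₂₃ R₁₂ R₂₃` on `(ℂ^N)^{⊗3}`. -/
def IsBraiding {N : ℕ} (R : RMat N) : Prop :=
  embR 3 R 0 * embR 3 R 1 * embR 3 R 0 = embR 3 R 1 * embR 3 R 0 * embR 3 R 1

/-- The Hecke condition `(q·I − R)(q⁻¹·I + R) = 0`. -/
def HeckeCond {N : ℕ} (R : RMat N) (q : ℂ) : Prop :=
  (q • (1 : RMat N) - R) * (q⁻¹ • (1 : RMat N) + R) = 0

/-- The Reflection Equation `R M₁ R M₁ = M₁ R M₁ R` (on `(ℂ^N)^{⊗2}`,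
with entries in `A`). -/
def RERel {N : ℕ} (R : RMat N) {A : Type _} [Ring A] [Algebra ℂ A]
    (M : Matrix (Fin N) (Fin N) A) : Prop :=
  liftC A (embR 2 R 0) * emb1 2 M * liftC A (embR 2 R 0) * emb1 2 M
    = emb1 2 M * liftC A (embR 2 R 0) * emb1 2 M * liftC A (embR 2 R 0)

/-- The relation `R⁻¹ D₁ R⁻¹ D₁ = D₁ R⁻¹ D₁ R⁻¹` on the matrix `D`,
where `Rinv = R⁻¹`. -/
def DDRel {N : ℕ} (Rinv : RMat N) {A : Type _} [Ring A] [Algebra ℂ A]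
    (D : Matrix (Fin N) (Fin N) A) : Prop :=
  liftC A (embR 2 Rinv 0) * emb1 2 D * liftC A (embR 2 Rinv 0) * emb1 2 D
    = emb1 2 D * liftC A (embR 2 Rinv 0) * emb1 2 D * liftC A (embR 2 Rinv 0)

/-- The permutation relations `D₁ R M₁ = R M₁ R⁻¹ D₁ R⁻¹ + I`, where `Rinv = R⁻¹`. -/
def PermRel {N : ℕ} (R Rinv : RMat N) {A : Type _} [Ring A] [Algebra ℂ A]
    (M D : Matrix (Fin N) (Fin N) A) : Prop :=
  emb1 2 D * liftC A (embR 2 R 0) * emb1 2 M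
    = liftC A (embR 2 R 0) * emb1 2 M * liftC A (embR 2 Rinv 0) * emb1 2 D *
        liftC A (embR 2 Rinv 0) + 1

/-- `Ψ` is the skew-inverse of `R`:  `Σ_{j,b} R^{ij}_{ab} Ψ^{bc}_{jd} = δ^i_d δ^c_a`. -/
def SkewInv {N : ℕ} (R Ψ : RMat N) : Prop :=
  ∀ i a c d : Fin N,
    (∑ j : Fin N, ∑ b : Fin N, R (i, j) (a, b) * Ψ (b, c) (j, d))
      = if i = d ∧ c = a then 1 else 0

/-- The matrix `C`, `C^c_d = Σ_i Ψ^{ic}_{id}`. -/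
def Cmat {N : ℕ} (Ψ : RMat N) : Matrix (Fin N) (Fin N) ℂ :=
  fun c d => ∑ i : Fin N, Ψ (i, c) (i, d)

/-- The `R`-trace over all `k` tensor factors: `⟨X⟩_{1…k} = Tr(C^{⊗k} X)`. -/
def rTr {N k : ℕ} {A : Type _} [Ring A] [Algebra ℂ A] (C : Matrix (Fin N) (Fin N) ℂ)
    (X : TMat N k A) : A :=
  ∑ f : Fin k → Fin N, ∑ g : Fin k → Fin N, (∏ j : Fin k, C (f j) (g j)) • X g f

/-- The chain `X_{1̄} X_{2̄} ⋯ X_{n̄}`. -/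
def upChain {N : ℕ} (k : ℕ) (R Rinv : RMat N) {A : Type _} [Ring A] [Algebra ℂ A]
    (X : Matrix (Fin N) (Fin N) A) (n : ℕ) : TMat N k A :=
  ((List.range n).map (copyX k R Rinv X)).prod

/-- The reversed chain `X_{n̄} X_{\overline{n-1}} ⋯ X_{1̄}`. -/
def downChain {N : ℕ} (k : ℕ) (R Rinv : RMat N) {A : Type _} [Ring A] [Algebra ℂ A]
    (X : Matrix (Fin N) (Fin N) A) (n : ℕ) : TMat N k A :=
  ((List.range n).reverse.map (copyX k R Rinv X)).prod

/-- The Capelli chain `L_{1̄}(L_{2̄} + q·1_q I)(L_{3̄} + q²·2_q I) ⋯ (L_{n̄} + q^{n-1}·(n-1)_q I)`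
(note `0_q = 0`). -/
def capChainA {N : ℕ} (k : ℕ) (R Rinv : RMat N) (q : ℂ) {A : Type _} [Ring A] [Algebra ℂ A]
    (L : Matrix (Fin N) (Fin N) A) (n : ℕ) : TMat N k A :=
  ((List.range n).map
    (fun i => copyX k R Rinv L i + ((q ^ i) * qNum q i) • (1 : TMat N k A))).prod

/-- The symmetric Capelli chain
`L_{1̄}(L_{2̄} - q⁻¹·1_q I) ⋯ (L_{n̄} - q^{-(n-1)}·(n-1)_q I)`. -/
def capChainS {N : ℕ} (k : ℕ) (R Rinv : RMat N) (q : ℂ) {A : Type _} [Ring A] [Algebra ℂ A]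
    (L : Matrix (Fin N) (Fin N) A) (n : ℕ) : TMat N k A :=
  ((List.range n).map
    (fun i => copyX k R Rinv L i - ((q⁻¹ ^ i) * qNum q i) • (1 : TMat N k A))).prod

/-- The descending chain `R_{a→b} = R_a R_{a-1} ⋯ R_b` (1-based indices;
identity when `b > a`). -/
def rChainDesc {N : ℕ} (k : ℕ) (R : RMat N) (a b : ℕ) : TMat N k ℂ :=
  ((List.range' b (a + 1 - b)).reverse.map (fun j => embR k R (j - 1))).prod

/-- The ascending chain `R_{b→a} = R_b R_{b+1} ⋯ R_a` (1-based indices;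
identity when `b > a`). -/
def rChainAsc {N : ℕ} (k : ℕ) (R : RMat N) (b a : ℕ) : TMat N k ℂ :=
  ((List.range' b (a + 1 - b)).map (fun j => embR k R (j - 1))).prod

/-- The shifted inclusion of `m` consecutive tensor factors. -/
def shF (i m k : ℕ) (h : i + m ≤ k) : Fin m → Fin k := fun x => ⟨i + x.val, by omega⟩

theorem shF_inj (i m k : ℕ) (h : i + m ≤ k) : Function.Injective (shF i m k h) := by
  intro x y hxy
  simp only [shF, Fin.mk.injEq] at hxy
  exact Fin.ext (by omega)

theorem mem_shF (i m k : ℕ) (h : i + m ≤ k) (j : Fin k) :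
    (∃ x, shF i m k h x = j) ↔ i ≤ j.val ∧ j.val < i + m := by
  constructor
  · rintro ⟨x, rfl⟩
    simp only [shF]
    omega
  · rintro ⟨h1, h2⟩
    exact ⟨⟨j.val - i, by omega⟩, Fin.ext (by simp only [shF]; omega)⟩

open Classical in
/-- Embedding of a matrix acting on the factors selected by `e`. -/
def embT {N m k : ℕ} {B : Type _} [Ring B] (e : Fin m → Fin k) (X : TMat N m B) : TMat N k B :=
  fun f g => if ∀ j, (¬ ∃ x, e x = j) → f j = g j then X (f ∘ e) (g ∘ e) else 0

open Classical in
theorem sum_agree {N m k : ℕ} {B : Type _} [Ring B] (e : Fin m → Fin k)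
    (he : Function.Injective e) (f : Fin k → Fin N) (F : (Fin k → Fin N) → B) :
    (∑ h, if ∀ j, (¬ ∃ x, e x = j) → f j = h j then F h else 0)
      = ∑ u : Fin m → Fin N, F (Function.extend e u f) := by
  rw [← Finset.sum_filter]
  symm
  refine Finset.sum_bij' (fun u _ => Function.extend e u f) (fun h _ => h ∘ e) ?_ ?_ ?_ ?_ ?_
  · intro u _
    simp only [Finset.mem_filter, Finset.mem_univ, true_and]
    intro j hj
    rw [Function.extend_apply' _ _ _ hj]
  · intro h _
    simp
  · intro u _
    funext x
    simp [he.extend_apply]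
  · intro h hh
    simp only [Finset.mem_filter, Finset.mem_univ, true_and] at hh
    funext j
    by_cases hj : ∃ x, e x = j
    · obtain ⟨x, rfl⟩ := hj
      simp [he.extend_apply]
    · rw [Function.extend_apply' _ _ _ hj, hh j hj]
  · intro u _
    rfl

theorem embT_mul_apply {N m k : ℕ} {B : Type _} [Ring B] (e : Fin m → Fin k)
    (he : Function.Injective e) (X : TMat N m B) (Y : TMat N k B) (f g : Fin k → Fin N) :
    (embT e X * Y) f g = ∑ u : Fin m → Fin N, X (f ∘ e) u * Y (Function.extend e u f) g := by
  classical
  rw [Matrix.mul_apply]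
  simp only [embT, ite_mul, zero_mul]
  rw [sum_agree e he f (fun h => X (f ∘ e) (h ∘ e) * Y h g)]
  refine Finset.sum_congr rfl fun u _ => ?_
  rw [Function.extend_comp he]

theorem embT_mul {N m k : ℕ} {B : Type _} [Ring B] (e : Fin m → Fin k)
    (he : Function.Injective e) (X Y : TMat N m B) :
    embT e X * embT e Y = embT e (X * Y) := by
  classical
  ext f g
  rw [embT_mul_apply e he]
  simp only [embT, Function.extend_comp he, Matrix.mul_apply]
  have hc : ∀ u : Fin m → Fin N, (∀ j, (¬ ∃ x, e x = j) → Function.extend e u f j = g j) ↔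
      (∀ j, (¬ ∃ x, e x = j) → f j = g j) := by
    intro u
    refine forall_congr' fun j => forall_congr' fun hj => ?_
    rw [Function.extend_apply' _ _ _ hj]
  simp only [hc]
  split_ifs <;> simp

theorem embT_one {N m k : ℕ} {B : Type _} [Ring B] (e : Fin m → Fin k) :
    embT e (1 : TMat N m B) = 1 := by
  classical
  ext f g
  simp only [embT, Matrix.one_apply]
  by_cases hfg : f = g
  · subst hfg
    simp
  · rw [if_neg hfg]
    split_ifs with h1 h2
    · exfalso
      apply hfg
      funext j
      by_cases hj : ∃ x, e x = j
      · obtain ⟨x, rfl⟩ := hj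
        exact congrFun h2 x
      · exact h1 j hj
    · rfl
    · rfl

theorem embT_mul_disj {N m n k : ℕ} {B : Type _} [Ring B] (e : Fin m → Fin k)
    (e' : Fin n → Fin k)
    (he : Function.Injective e) (hd : ∀ x y, e x ≠ e' y) (X : TMat N m B) (Y : TMat N n B)
    (f g : Fin k → Fin N) [Decidable (∀ j, (¬ ∃ x, e x = j) → (¬ ∃ x, e' x = j) → f j = g j)] :
    (embT e X * embT e' Y) f g =
      if ∀ j, (¬ ∃ x, e x = j) → (¬ ∃ x, e' x = j) → f j = g j then
        X (f ∘ e) (g ∘ e) * Y (f ∘ e') (g ∘ e') else 0 := by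
  classical
  rw [embT_mul_apply e he]
  have hne : ∀ y, ¬ ∃ x, e x = e' y := fun y ⟨x, hx⟩ => hd x y hx
  have h1 : ∀ u, Function.extend e u f ∘ e' = f ∘ e' := by
    intro u
    funext y
    simp only [Function.comp]
    rw [Function.extend_apply' _ _ _ (hne y)]
  have hc : ∀ u : Fin m → Fin N, (∀ j, (¬ ∃ x, e' x = j) → Function.extend e u f j = g j) ↔
      (u = g ∘ e ∧ ∀ j, (¬ ∃ x, e x = j) → (¬ ∃ x, e' x = j) → f j = g j) := by
    intro u
    constructor
    · intro h
      refine ⟨?_, ?_⟩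
      · funext x
        have := h (e x) (fun ⟨y, hy⟩ => hd x y hy.symm)
        rwa [he.extend_apply] at this
      · intro j hj hj'
        have := h j hj'
        rwa [Function.extend_apply' _ _ _ hj] at this
    · rintro ⟨rfl, h⟩ j hj'
      by_cases hj : ∃ x, e x = j
      · obtain ⟨x, rfl⟩ := hj
        simp [he.extend_apply]
      · rw [Function.extend_apply' _ _ _ hj]
        exact h j hj hj'
  simp only [embT, h1, hc]
  split_ifs with h
  · simp only [eq_true h, and_true, mul_ite, mul_zero, Finset.sum_ite_eq', Finset.sum_ite_eq,
      Finset.mem_univ, if_true]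
  · simp only [eq_false h, and_false, if_false, mul_zero, Finset.sum_const_zero]

theorem embT_comm {N m n k : ℕ} {B : Type _} [Ring B] (e : Fin m → Fin k)
    (e' : Fin n → Fin k) (he : Function.Injective e) (he' : Function.Injective e')
    (hd : ∀ x y, e x ≠ e' y) (X : TMat N m B) (Y : TMat N n B)
    (hXY : ∀ a b c d, X a b * Y c d = Y c d * X a b) :
    embT e X * embT e' Y = embT e' Y * embT e X := by
  classical
  ext f g
  rw [embT_mul_disj e e' he hd, embT_mul_disj e' e he' (fun x y h => hd y x h.symm), hXY]
  refine if_congr ?_ rfl rfl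
  exact forall_congr' fun j => forall_comm

theorem liftC_embT {N m k : ℕ} {A : Type _} [Ring A] [Algebra ℂ A] (e : Fin m → Fin k)
    (X : TMat N m ℂ) : liftC A (embT e X) = embT e (liftC A X) := by
  classical
  ext f g
  simp only [liftC, embT, Matrix.map_apply]
  split_ifs <;> simp

theorem liftC_mul {N k : ℕ} {A : Type _} [Ring A] [Algebra ℂ A] (X Y : TMat N k ℂ) :
    liftC A (X * Y) = liftC A X * liftC A Y := by
  simp only [liftC]
  exact Matrix.map_mul

theorem liftC_one {N k : ℕ} {A : Type _} [Ring A] [Algebra ℂ A] :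
    liftC A (1 : TMat N k ℂ) = 1 := by
  simp [liftC]

theorem embR_eq {N : ℕ} (R : RMat N) (i l m k : ℕ) (h : i + m ≤ k) (hl : l + 1 < m) :
    embR k R (i + l) = embT (shF i m k h) (embR m R l) := by
  classical
  ext f g
  have hk : i + l + 1 < k := by omega
  simp only [embR, embT, dif_pos hk, dif_pos hl, mem_shF]
  rw [← ite_and]
  refine if_congr ?_ rfl rfl
  constructor
  · intro H
    refine ⟨fun j hj => H j (by omega) (by omega), fun j h1 h2 => H _ ?_ ?_⟩
    · simp only [shF]; omega
    · simp only [shF]; omega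
  · rintro ⟨H1, H2⟩ j h1 h2
    by_cases hj : i ≤ j.val ∧ j.val < i + m
    · obtain ⟨x, rfl⟩ := (mem_shF i m k h j).2 hj
      simp only [shF] at h1 h2
      exact H2 x (by omega) (by omega)
    · exact H1 j hj

theorem emb1_eq {N : ℕ} {A : Type _} [Ring A] (M : Matrix (Fin N) (Fin N) A)
    (m k : ℕ) (h : 0 + m ≤ k) (hm : 0 < m) :
    emb1 k M = embT (shF 0 m k h) (emb1 m M) := by
  classical
  ext f g
  have hk : 0 < k := by omega
  simp only [emb1, embT, dif_pos hk, dif_pos hm, mem_shF]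
  rw [← ite_and]
  refine if_congr ?_ rfl rfl
  constructor
  · intro H
    refine ⟨fun j hj => H j (by omega), fun j h1 => H _ ?_⟩
    simp only [shF]; omega
  · rintro ⟨H1, H2⟩ j h1
    by_cases hj : 0 ≤ j.val ∧ j.val < 0 + m
    · obtain ⟨x, rfl⟩ := (mem_shF 0 m k h j).2 hj
      simp only [shF] at h1
      exact H2 x (by omega)
    · exact H1 j hj

theorem embR_two {N : ℕ} (R : RMat N) :
    embR 2 R 0 = R.submatrix (finTwoArrowEquiv (Fin N)) (finTwoArrowEquiv (Fin N)) := by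
  ext f g
  have : ∀ j : Fin 2, j.val ≠ 0 → j.val ≠ 0 + 1 → f j = g j := by
    intro j h1 h2
    omega
  simp only [embR]
  rw [dif_pos (by norm_num), if_pos this]
  rfl

theorem embR_two_inv {N : ℕ} (R S : RMat N) (h : R * S = 1) :
    embR 2 R 0 * embR 2 S 0 = 1 := by
  rw [embR_two, embR_two, Matrix.submatrix_mul_equiv, h, Matrix.submatrix_one_equiv]

theorem embR_inv {N : ℕ} (R S : RMat N) (h : R * S = 1) (k i : ℕ) (hi : i + 2 ≤ k)
    (A : Type _) [Ring A] [Algebra ℂ A] :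
    liftC A (embR k R i) * liftC A (embR k S i) = 1 := by
  have h1 := embR_eq R i 0 2 k hi (by norm_num)
  have h2 := embR_eq S i 0 2 k hi (by norm_num)
  simp only [add_zero] at h1 h2
  rw [← liftC_mul, h1, h2, embT_mul _ (shF_inj _ _ _ _), embR_two_inv R S h, embT_one, liftC_one]

theorem embR_braid {N : ℕ} (R : RMat N) (h : IsBraiding R) (k i : ℕ) (hi : i + 3 ≤ k)
    (A : Type _) [Ring A] [Algebra ℂ A] :
    liftC A (embR k R i) * liftC A (embR k R (i + 1)) * liftC A (embR k R i)
      = liftC A (embR k R (i + 1)) * liftC A (embR k R i) * liftC A (embR k R (i + 1)) := by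
  have h1 := embR_eq R i 0 3 k hi (by norm_num)
  have h2 := embR_eq R i 1 3 k hi (by norm_num)
  simp only [add_zero] at h1 h2
  have hj := shF_inj i 3 k hi
  simp only [← liftC_mul, h1, h2, embT_mul _ hj]
  rw [h]

theorem embR_far {N : ℕ} (R S : RMat N) (k i j : ℕ) (hij : i + 2 ≤ j) (hj : j + 2 ≤ k)
    (A : Type _) [Ring A] [Algebra ℂ A] :
    liftC A (embR k R i) * liftC A (embR k S j) = liftC A (embR k S j) * liftC A (embR k R i) := by
  have h1 := embR_eq R i 0 2 k (by omega) (by norm_num)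
  have h2 := embR_eq S j 0 2 k hj (by norm_num)
  simp only [add_zero] at h1 h2
  rw [← liftC_mul, ← liftC_mul, h1, h2,
    embT_comm _ _ (shF_inj _ _ _ _) (shF_inj _ _ _ _) _ _ _ (fun a b c d => mul_comm _ _)]
  intro x y hxy
  simp only [shF, Fin.mk.injEq] at hxy
  omega

theorem embR_emb1 {N : ℕ} (S : RMat N) (k j : ℕ) (hij : 1 ≤ j) (hj : j + 2 ≤ k)
    {A : Type _} [Ring A] [Algebra ℂ A] (M : Matrix (Fin N) (Fin N) A) :
    emb1 k M * liftC A (embR k S j) = liftC A (embR k S j) * emb1 k M := by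
  have h2 := embR_eq S j 0 2 k hj (by norm_num)
  simp only [add_zero] at h2
  rw [h2, liftC_embT, emb1_eq M 1 k (by omega) (by norm_num),
    embT_comm _ _ (shF_inj _ _ _ _) (shF_inj _ _ _ _)]
  · intro x y hxy
    simp only [shF, Fin.mk.injEq] at hxy
    omega
  · intro a b c d
    simp only [liftC, Matrix.map_apply]
    exact (Algebra.commutes _ _).symm

theorem RE_k {N : ℕ} (R : RMat N) (k : ℕ) (hk : 2 ≤ k)
    {A : Type _} [Ring A] [Algebra ℂ A] (M : Matrix (Fin N) (Fin N) A) (hRE : RERel R M) :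
    liftC A (embR k R 0) * emb1 k M * liftC A (embR k R 0) * emb1 k M
      = emb1 k M * liftC A (embR k R 0) * emb1 k M * liftC A (embR k R 0) := by
  have h1 := embR_eq R 0 0 2 k (by omega) (by norm_num)
  simp only [add_zero] at h1
  have hj := shF_inj 0 2 k (by omega)
  rw [h1, liftC_embT, emb1_eq M 2 k (by omega) (by norm_num)]
  simp only [embT_mul _ hj]
  rw [hRE]

theorem copy_comm {N : ℕ} (R Rinv S : RMat N) (k : ℕ)
    {A : Type _} [Ring A] [Algebra ℂ A] (M : Matrix (Fin N) (Fin N) A) (i : ℕ) :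
    ∀ j, i + 1 ≤ j → j + 2 ≤ k →
      copyX k R Rinv M i * liftC A (embR k S j) = liftC A (embR k S j) * copyX k R Rinv M i := by
  induction i with
  | zero =>
    intro j h1 h2
    exact embR_emb1 S k j (by omega) h2 M
  | succ i ih =>
    intro j h1 h2
    simp only [copyX]
    have c1 : Commute (liftC A (embR k R i)) (liftC A (embR k S j)) :=
      embR_far R S k i j (by omega) h2 A
    have c2 : Commute (liftC A (embR k Rinv i)) (liftC A (embR k S j)) :=
      embR_far Rinv S k i j (by omega) h2 A
    have c3 : Commute (copyX k R Rinv M i) (liftC A (embR k S j)) := ih j (by omega) h2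
    exact (c1.mul_left c3).mul_left c2

theorem ring_step {B : Type _} [Ring B] (a a' b b' m : B) (ha : a * a' = 1) (ha' : a' * a = 1)
    (hb : b * b' = 1) (hb' : b' * b = 1) (hbr : a * b * a = b * a * b)
    (hm : m * b = b * m) (hm' : m * b' = b' * m) (hre : a * m * a * m = m * a * m * a) :
    b * (a * m * a') * b * (a * m * a') = (a * m * a') * b * (a * m * a') * b := by
  have e1 : a' * b * a = b * a * b' := by
    calc a' * b * a = a' * (b * a * b) * b' := by
          simp only [mul_assoc, hb, mul_one]
      _ = (a' * a) * b * a * b' := by rw [← hbr]; simp only [mul_assoc]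
      _ = b * a * b' := by rw [ha', one_mul]
  have e2 : b' * a' * b = a * b' * a' := by
    calc b' * a' * b = b' * (a' * b * a) * a' := by
          simp only [mul_assoc, ha, mul_one]
      _ = (b' * b) * a * b' * a' := by rw [e1]; simp only [mul_assoc]
      _ = a * b' * a' := by rw [hb', one_mul]
  have key : m * (a' * b * a) * m = b * (m * a * m) * b' := by
    calc m * (a' * b * a) * m = (m * b) * a * (b' * m) := by rw [e1]; simp only [mul_assoc]
      _ = b * (m * a * m) * b' := by rw [hm, ← hm']; simp only [mul_assoc]
  calc b * (a * m * a') * b * (a * m * a') = b * a * (m * (a' * b * a) * m) * a' := by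
        simp only [mul_assoc]
    _ = (b * a * b) * (m * a * m) * b' * a' := by rw [key]; simp only [mul_assoc]
    _ = a * b * (a * m * a * m) * b' * a' := by rw [← hbr]; simp only [mul_assoc]
    _ = a * b * (m * a * m) * (a * b' * a') := by rw [hre]; simp only [mul_assoc]
    _ = a * (b * (m * a * m) * b') * a' * b := by rw [← e2]; simp only [mul_assoc]
    _ = (a * m * a') * b * (a * m * a') * b := by rw [← key]; simp only [mul_assoc]

theorem RE_copy {N : ℕ} (R Rinv : RMat N) (hinv : R * Rinv = 1) (hinv' : Rinv * R = 1)
    (hbr : IsBraiding R) (k : ℕ)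
    {A : Type _} [Ring A] [Algebra ℂ A] (M : Matrix (Fin N) (Fin N) A) (hRE : RERel R M)
    (i : ℕ) : i + 2 ≤ k →
    liftC A (embR k R i) * copyX k R Rinv M i * liftC A (embR k R i) * copyX k R Rinv M i
      = copyX k R Rinv M i * liftC A (embR k R i) * copyX k R Rinv M i * liftC A (embR k R i) := by
  induction i with
  | zero =>
    intro h
    exact RE_k R k (by omega) M hRE
  | succ i ih =>
    intro h
    simp only [copyX]
    exact ring_step _ _ _ (liftC A (embR k Rinv (i + 1))) _
      (embR_inv R Rinv hinv k i (by omega) A) (embR_inv Rinv R hinv' k i (by omega) A)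
      (embR_inv R Rinv hinv k (i + 1) h A) (embR_inv Rinv R hinv' k (i + 1) h A)
      (embR_braid R hbr k i (by omega) A)
      (copy_comm R Rinv R k M i (i + 1) le_rfl h)
      (copy_comm R Rinv Rinv k M i (i + 1) le_rfl h) (ih (by omega))

/-- higher-copy form of the Reflection Equation:
for all `p ≥ 1`, `R_p M_{p̄} M_{\overline{p+1}} = M_{p̄} M_{\overline{p+1}} R_p`
as `N^{p+1} × N^{p+1}` matrices over `𝒜`. -/
theorem statement0 {N : ℕ} (R Rinv : RMat N) (q : ℂ)
    (hq0 : q ≠ 0) (hq1 : q ≠ 1) (hqm1 : q ≠ -1)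
    (hinv : R * Rinv = 1) (hinv' : Rinv * R = 1)
    (hbr : IsBraiding R) (hH : HeckeCond R q)
    {A : Type _} [Ring A] [Algebra ℂ A]
    (M : Matrix (Fin N) (Fin N) A) (hRE : RERel R M) :
    ∀ p : ℕ, 1 ≤ p →
      liftC A (embR (p + 1) R (p - 1)) * copyX (p + 1) R Rinv M (p - 1) *
          copyX (p + 1) R Rinv M p
        = copyX (p + 1) R Rinv M (p - 1) * copyX (p + 1) R Rinv M p *
            liftC A (embR (p + 1) R (p - 1)) := by
  intro p hp
  obtain ⟨i, rfl⟩ : ∃ i, p = i + 1 := ⟨p - 1, by omega⟩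
  simp only [Nat.add_sub_cancel]
  have H := RE_copy R Rinv hinv hinv' hbr (i + 1 + 1) M hRE i (by omega)
  have h1 := embR_inv R Rinv hinv (i + 1 + 1) i (by omega) A
  have h2 := embR_inv Rinv R hinv' (i + 1 + 1) i (by omega) A
  have e : copyX (i + 1 + 1) R Rinv M (i + 1) = liftC A (embR (i + 1 + 1) R i) *
    copyX (i + 1 + 1) R Rinv M i * liftC A (embR (i + 1 + 1) Rinv i) := rfl
  rw [e]
  generalize copyX (i + 1 + 1) R Rinv M i = m at *
  generalize liftC A (embR (i + 1 + 1) R i) = a at *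
  generalize liftC A (embR (i + 1 + 1) Rinv i) = a' at *
  calc a * m * (a * m * a') = (a * m * a * m) * a' := by simp only [mul_assoc]
    _ = m * (a * m * a') * a := by rw [H]; simp only [mul_assoc, h1, h2]
end
end

section
/- Let R be a Hecke symmetry with parameter q, and let M and D be N×N matrices with entries in a unital associative ℂ-algebra 𝒜 satisfying the permutation relations D₁ R M₁ = R M₁ R⁻¹ D₁ R⁻¹ + I. Then, as an identity of N³×N³ matrices over 𝒜, D₁ (R₂ M_{2̄} M_{3̄} − M_{2̄} M_{3̄} R₂) = (R₂ M_{2̄} M_{3̄} − M_{2̄} M_{3̄} R₂) D₁ R₁⁻¹ R₂⁻² R₁⁻¹. -/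
open Matrix BigOperators

noncomputable section

theorem sum_fin3 {N : ℕ} {B : Type _} [AddCommMonoid B] (F : (Fin 3 → Fin N) → B) :
    ∑ f, F f = ∑ a, ∑ b, ∑ c, F ![a, b, c] := by
  rw [← (Fin.consEquiv (fun _ : Fin 3 => Fin N)).sum_comp, Fintype.sum_prod_type]
  refine Finset.sum_congr rfl fun a _ => ?_
  rw [← (Fin.consEquiv (fun _ : Fin 2 => Fin N)).sum_comp, Fintype.sum_prod_type]
  refine Finset.sum_congr rfl fun b _ => ?_
  rw [← (Equiv.funUnique (Fin 1) (Fin N)).symm.sum_comp]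
  refine Finset.sum_congr rfl fun c _ => ?_
  congr 1
  funext i
  fin_cases i <;> rfl

theorem sum_fin2 {N : ℕ} {B : Type _} [AddCommMonoid B] (F : (Fin 2 → Fin N) → B) :
    ∑ f, F f = ∑ a, ∑ b, F ![a, b] := by
  rw [← (Fin.consEquiv (fun _ : Fin 2 => Fin N)).sum_comp, Fintype.sum_prod_type]
  refine Finset.sum_congr rfl fun b _ => ?_
  rw [← (Equiv.funUnique (Fin 1) (Fin N)).symm.sum_comp]
  refine Finset.sum_congr rfl fun c _ => ?_
  congr 1
  funext i
  fin_cases i <;> rfl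

theorem embR30_apply {N : ℕ} (R : RMat N) (f g : Fin 3 → Fin N) :
    embR 3 R 0 f g = if f 2 = g 2 then R (f 0, f 1) (g 0, g 1) else 0 := by
  simp [embR, Fin.forall_fin_succ]

theorem embR31_apply {N : ℕ} (R : RMat N) (f g : Fin 3 → Fin N) :
    embR 3 R 1 f g = if f 0 = g 0 then R (f 1, f 2) (g 1, g 2) else 0 := by
  simp [embR, Fin.forall_fin_succ]

theorem embR20_apply {N : ℕ} (R : RMat N) (f g : Fin 2 → Fin N) :
    embR 2 R 0 f g = R (f 0, f 1) (g 0, g 1) := by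
  simp [embR, Fin.forall_fin_succ]

theorem emb13_apply {N : ℕ} {A : Type _} [Ring A] (X : Matrix (Fin N) (Fin N) A)
    (f g : Fin 3 → Fin N) :
    emb1 3 X f g = if f 1 = g 1 ∧ f 2 = g 2 then X (f 0) (g 0) else 0 := by
  simp [emb1, Fin.forall_fin_succ]

theorem emb12_apply {N : ℕ} {A : Type _} [Ring A] (X : Matrix (Fin N) (Fin N) A)
    (f g : Fin 2 → Fin N) :
    emb1 2 X f g = if f 1 = g 1 then X (f 0) (g 0) else 0 := by
  simp [emb1, Fin.forall_fin_succ]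

theorem embR30_mul {N : ℕ} (R S : RMat N) :
    embR 3 R 0 * embR 3 S 0 = embR 3 (R * S) 0 := by
  ext f g
  simp only [Matrix.mul_apply, sum_fin3, embR30_apply, Fintype.sum_prod_type]
  by_cases h : f 2 = g 2
  · simp [h]
  · rw [if_neg h]
    refine Finset.sum_eq_zero fun a _ => Finset.sum_eq_zero fun b _ =>
      Finset.sum_eq_zero fun c _ => ?_
    by_cases h2 : f 2 = c
    · subst h2
      simp [h]
    · simp [h2]

theorem embR31_mul {N : ℕ} (R S : RMat N) :
    embR 3 R 1 * embR 3 S 1 = embR 3 (R * S) 1 := by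
  ext f g
  simp only [Matrix.mul_apply, sum_fin3, embR31_apply, Fintype.sum_prod_type]
  rw [Finset.sum_eq_single (f 0)]
  · by_cases h : f 0 = g 0 <;> simp [h]
  · intro b _ hb
    simp [hb.symm]
  · simp

theorem embR30_one {N : ℕ} : embR 3 (1 : RMat N) 0 = 1 := by
  ext f g
  simp only [embR30_apply, Matrix.one_apply, Prod.mk.injEq, funext_iff, Fin.forall_fin_succ]
  by_cases h : f 2 = g 2 <;> simp [h]

theorem embR31_one {N : ℕ} : embR 3 (1 : RMat N) 1 = 1 := by
  ext f g
  simp only [embR31_apply, Matrix.one_apply, Prod.mk.injEq, funext_iff, Fin.forall_fin_succ]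
  by_cases h : f 0 = g 0 <;> simp [h]

theorem embR30_sub {N : ℕ} (R : RMat N) (c : ℂ) :
    embR 3 (R - c • 1) 0 = embR 3 R 0 - c • 1 := by
  rw [← embR30_one]
  ext f g
  simp only [embR30_apply, Matrix.sub_apply, Matrix.smul_apply]
  split_ifs <;> simp

theorem embR31_sub {N : ℕ} (R : RMat N) (c : ℂ) :
    embR 3 (R - c • 1) 1 = embR 3 R 1 - c • 1 := by
  rw [← embR31_one]
  ext f g
  simp only [embR31_apply, Matrix.sub_apply, Matrix.smul_apply]
  split_ifs <;> simp

theorem liftC_sub {N k : ℕ} {A : Type _} [Ring A] [Algebra ℂ A] (X : TMat N k ℂ) (c : ℂ) :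
    liftC A (X - c • 1) = liftC A X - c • 1 := by
  ext f g
  simp only [liftC, Matrix.map_apply, Matrix.sub_apply, Matrix.smul_apply, map_sub, smul_eq_mul,
    map_mul, Algebra.smul_def c (_ : A), Matrix.one_apply]
  split_ifs <;> simp

/-- A matrix on two tensor factors, acting in the first two of three factors. -/
def up {N : ℕ} {A : Type _} [Ring A] (X : TMat N 2 A) : TMat N 3 A := fun f g =>
  if f 2 = g 2 then X ![f 0, f 1] ![g 0, g 1] else 0

theorem up_mul {N : ℕ} {A : Type _} [Ring A] (X Y : TMat N 2 A) :
    up (X * Y) = up X * up Y := by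
  ext f g
  simp only [up, Matrix.mul_apply, sum_fin3, sum_fin2]
  by_cases h : f 2 = g 2
  · simp [h]
  · rw [if_neg h]
    symm
    refine Finset.sum_eq_zero fun a _ => Finset.sum_eq_zero fun b _ =>
      Finset.sum_eq_zero fun c _ => ?_
    by_cases h2 : f 2 = c
    · subst h2
      simp [h]
    · simp [h2]

theorem up_add {N : ℕ} {A : Type _} [Ring A] (X Y : TMat N 2 A) :
    up (X + Y) = up X + up Y := by
  ext f g
  simp only [up, Matrix.add_apply]
  split_ifs <;> simp

theorem up_one {N : ℕ} {A : Type _} [Ring A] : up (1 : TMat N 2 A) = 1 := by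
  ext f g
  simp only [up, Matrix.one_apply, funext_iff, Fin.forall_fin_succ]
  by_cases h : f 2 = g 2 <;> simp [h]

theorem up_emb1 {N : ℕ} {A : Type _} [Ring A] (X : Matrix (Fin N) (Fin N) A) :
    up (emb1 2 X) = emb1 3 X := by
  ext f g
  simp only [up, emb12_apply, emb13_apply]
  by_cases h : f 2 = g 2 <;> simp [h]

theorem up_embR {N : ℕ} {A : Type _} [Ring A] [Algebra ℂ A] (R : RMat N) :
    up (liftC A (embR 2 R 0)) = liftC A (embR 3 R 0) := by
  ext f g
  simp only [up, liftC, Matrix.map_apply, embR20_apply, embR30_apply]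
  by_cases h : f 2 = g 2 <;> simp [h]

theorem emb1_comm {N : ℕ} {A : Type _} [Ring A] [Algebra ℂ A] (X : Matrix (Fin N) (Fin N) A)
    (R : RMat N) :
    emb1 3 X * liftC A (embR 3 R 1) = liftC A (embR 3 R 1) * emb1 3 X := by
  ext f g
  simp only [liftC, Matrix.mul_apply, sum_fin3, Matrix.map_apply, embR31_apply, emb13_apply]
  trans X (f 0) (g 0) * algebraMap ℂ A (R (f 1, f 2) (g 1, g 2))
  · rw [Finset.sum_eq_single (g 0)]
    · rw [Finset.sum_eq_single (f 1)]
      · rw [Finset.sum_eq_single (f 2)]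
        · simp
        · intro b _ hb
          simp [hb.symm]
        · simp
      · intro b _ hb
        simp [hb.symm]
      · simp
    · intro b _ hb
      simp [hb]
    · simp
  · rw [← Algebra.commutes]
    symm
    rw [Finset.sum_eq_single (f 0)]
    · rw [Finset.sum_eq_single (g 1)]
      · rw [Finset.sum_eq_single (g 2)]
        · simp
        · intro b _ hb
          simp [hb]
        · simp
      · intro b _ hb
        simp [hb]
      · simp
    · intro b _ hb
      simp [hb.symm]
    · simp

/-- The purely ring-theoretic core of the argument. -/
theorem core {B : Type _} [Ring B] [Algebra ℂ B] (r s r' s' M D : B) (l : ℂ)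
    (hr : r * r' = 1) (hr' : r' * r = 1) (hs : s * s' = 1) (hs' : s' * s = 1)
    (hbr : r * s * r = s * r * s)
    (hlr : r' = r - l • 1) (hls : s' = s - l • 1)
    (hMs : M * s = s * M) (hMs' : M * s' = s' * M)
    (hDs : D * s = s * D) (hDs' : D * s' = s' * D)
    (hp : D * r * M = r * M * r' * D * r' + 1) :
    D * (s * (r * M * r') * (s * (r * M * r') * s') - (r * M * r') * (s * (r * M * r') * s') * s)
     = (s * (r * M * r') * (s * (r * M * r') * s') - (r * M * r') * (s * (r * M * r') * s') * s)
       * D * (r' * (s' * s') * r') := by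
  have rr (x : B) : r * (r' * x) = x := by rw [← mul_assoc, hr, one_mul]
  have rr' (x : B) : r' * (r * x) = x := by rw [← mul_assoc, hr', one_mul]
  have ss (x : B) : s * (s' * x) = x := by rw [← mul_assoc, hs, one_mul]
  have ss' (x : B) : s' * (s * x) = x := by rw [← mul_assoc, hs', one_mul]
  -- braid consequences
  have b1 : r' * s * r = s * r * s' := by
    calc r' * s * r = r' * (s * r * s) * s' := by simp only [mul_assoc, hs, mul_one]
      _ = r' * (r * s * r) * s' := by rw [hbr]
      _ = s * r * s' := by simp only [mul_assoc, rr']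
  have b2 : s' * r' * s' = r' * s' * r' := by
    calc s' * r' * s' = s' * r' * s' * (r * s * r) * (r' * s' * r') := by
          simp only [mul_assoc, rr, ss, hr, hs, mul_one]
      _ = s' * r' * s' * (s * r * s) * (r' * s' * r') := by rw [hbr]
      _ = r' * s' * r' := by simp only [mul_assoc, rr', ss']
  have b3 : s' * r' * s' * s = r * (s' * r' * s') := by
    rw [b2, ← b2]
    conv_rhs => rw [b2]
    simp only [mul_assoc, rr, hs', mul_one]
  set X := r' * (s' * s') * r' with hX
  have xs' : X * s' = s' * X := by
    calc X * s' = r' * s' * (s' * r' * s') := by simp only [hX, mul_assoc]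
      _ = r' * s' * r' * (s' * r') := by rw [b2]; simp only [mul_assoc]
      _ = s' * X := by rw [← b2]; simp only [hX, mul_assoc]
  have xs : X * s = s * X := by
    calc X * s = s * (s' * X) * s := by simp only [mul_assoc, ss]
      _ = s * X := by rw [← xs']; simp only [mul_assoc, hs', mul_one]
  set w := s' * r' * s' with hw
  set P := (r * M * r') * (s * (r * M * r') * s') with hP
  have key : D * P = P * D * X + (r * M * r' * w + s * r * M * w) := by
    have e1 : D * P = (D * r * M) * (s * r * M) * w := by
      calc D * P = D * r * M * (r' * s * r) * M * r' * s' := by simp only [hP, mul_assoc]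
        _ = D * r * M * s * r * (s' * M) * r' * s' := by rw [b1]; simp only [mul_assoc]
        _ = _ := by rw [← hMs']; simp only [hw, mul_assoc]
    have e2 : D * (r' * s * r * M) = s * (D * r * M) * s' := by
      calc D * (r' * s * r * M) = D * s * r * (s' * M) := by rw [b1]; simp only [mul_assoc]
        _ = s * (D * r * M) * s' := by rw [← hMs', hDs]; simp only [mul_assoc]
    have e3 : D * P = r * M * r' * (D * (r' * s * r * M)) * w + s * r * M * w := by
      rw [e1, hp]
      simp only [add_mul, one_mul, mul_assoc]
    rw [e3, e2, hp]
    have e5 : r * M * r' * (s * (r * M * r' * D * r' + 1) * s') * w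
        = r * M * r' * s * r * M * r' * (D * (X * s')) + r * M * r' * w := by
      simp only [mul_add, add_mul, mul_one, hs, hX, hw, mul_assoc, ss]
    rw [e5, xs']
    have e6 : D * (s' * X) = s' * D * X := by rw [← hDs', mul_assoc]
    rw [e6, hP]
    simp only [mul_assoc, add_assoc]
  have ll : s * s = l • s + 1 := by
    have : s * s' = s * s - l • s := by rw [hls]; simp [mul_sub]
    rw [hs] at this
    rw [this]; abel
  have hE : s * (r * M * r' * w + s * r * M * w) = (r * M * r' * w + s * r * M * w) * s := by
    have l1 : s * (r * M * r' * w) = s * r * M * r * w - l • (s * r * M * w) := by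
      rw [hlr]; simp only [mul_sub, sub_mul, mul_assoc, mul_one, one_mul, mul_smul_comm, smul_mul_assoc]
    have l2 : s * (s * r * M * w) = l • (s * r * M * w) + r * M * w := by
      calc s * (s * r * M * w) = (s * s) * (r * M * w) := by simp only [mul_assoc]
        _ = _ := by rw [ll]; simp only [add_mul, one_mul, smul_mul_assoc, mul_assoc]
    have l3 : r * M * r' * w * s = r * M * w := by
      rw [mul_assoc, b3]; simp only [mul_assoc, rr']
    have l4 : s * r * M * w * s = s * r * M * r * w := by
      rw [mul_assoc, b3]; simp only [mul_assoc]
    rw [mul_add, add_mul, l1, l2, l3, l4]; abel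
  have g1 : s * (r * M * r') * (s * (r * M * r') * s') = s * P := by
    simp only [hP, mul_assoc]
  rw [g1, mul_sub, ← mul_assoc, hDs, mul_assoc, ← mul_assoc D P s, key, mul_add, add_mul, hE]
  have g2 : P * D * X * s = P * s * D * X := by
    rw [mul_assoc, xs, ← mul_assoc, mul_assoc P, hDs]
    simp only [mul_assoc]
  rw [g2]
  simp only [sub_mul, mul_assoc]
  abel

/-- the permutation relations preserve the defining ideal of the
RE algebra:
`D₁ (R₂ M_{2̄} M_{3̄} − M_{2̄} M_{3̄} R₂)
  = (R₂ M_{2̄} M_{3̄} − M_{2̄} M_{3̄} R₂) D₁ R₁⁻¹ R₂⁻² R₁⁻¹`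
as `N³ × N³` matrices over `𝒜`. -/
theorem statement1 {N : ℕ} (R Rinv : RMat N) (q : ℂ)
    (hq0 : q ≠ 0) (hq1 : q ≠ 1) (hqm1 : q ≠ -1)
    (hinv : R * Rinv = 1) (hinv' : Rinv * R = 1)
    (hbr : IsBraiding R) (hH : HeckeCond R q)
    {A : Type _} [Ring A] [Algebra ℂ A]
    (M D : Matrix (Fin N) (Fin N) A) (hperm : PermRel R Rinv M D) :
    emb1 3 D *
        (liftC A (embR 3 R 1) * copyX 3 R Rinv M 1 * copyX 3 R Rinv M 2
          - copyX 3 R Rinv M 1 * copyX 3 R Rinv M 2 * liftC A (embR 3 R 1))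
      = (liftC A (embR 3 R 1) * copyX 3 R Rinv M 1 * copyX 3 R Rinv M 2
          - copyX 3 R Rinv M 1 * copyX 3 R Rinv M 2 * liftC A (embR 3 R 1)) *
          emb1 3 D *
          liftC A (embR 3 Rinv 0 * (embR 3 Rinv 1 * embR 3 Rinv 1) * embR 3 Rinv 0) := by
  have hR : Rinv = R - (q - q⁻¹) • 1 := by
    have h1 : (q • (1 : RMat N) - R) * (q⁻¹ • (1 : RMat N) + R)
        = 1 + (q - q⁻¹) • R - R * R := by
      have h0 : q⁻¹ • q • (1 : RMat N) = 1 := by rw [smul_smul, inv_mul_cancel₀ hq0, one_smul]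
      simp only [sub_mul, mul_add, smul_mul_assoc, mul_smul_comm, one_mul, mul_one, sub_smul,
        smul_sub, h0]
      abel
    have h2 : (1 + (q - q⁻¹) • R - R * R) * Rinv = 0 := by
      rw [← h1, show _ = _ from hH, zero_mul]
    rw [sub_mul, add_mul, one_mul, smul_mul_assoc, mul_assoc, hinv, mul_one] at h2
    exact eq_sub_of_add_eq (sub_eq_zero.mp h2)
  have hp := congrArg up hperm
  simp only [up_mul, up_add, up_one, up_emb1, up_embR] at hp
  have hb := congrArg (liftC A) hbr
  simp only [liftC_mul] at hb
  have main := core (liftC A (embR 3 R 0)) (liftC A (embR 3 R 1)) (liftC A (embR 3 Rinv 0))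
    (liftC A (embR 3 Rinv 1)) (emb1 3 M) (emb1 3 D) (q - q⁻¹)
    (by rw [← liftC_mul, embR30_mul, hinv, embR30_one, liftC_one])
    (by rw [← liftC_mul, embR30_mul, hinv', embR30_one, liftC_one])
    (by rw [← liftC_mul, embR31_mul, hinv, embR31_one, liftC_one])
    (by rw [← liftC_mul, embR31_mul, hinv', embR31_one, liftC_one])
    hb
    (by rw [hR, embR30_sub, liftC_sub])
    (by rw [hR, embR31_sub, liftC_sub])
    (emb1_comm _ _) (emb1_comm _ _) (emb1_comm _ _) (emb1_comm _ _) hp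
  simp only [liftC_mul, copyX]
  exact main
end
end
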